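/- (F_(C,β), d_α) is a complete metric space: every sequence (f_n) in F_(C,β) that is Cauchy with respect to d_α converges in the metric d_α to some f ∈ F_(C,β). -/

import Mathlib

open MeasureTheory Set Filter Topology
open scoped ENNReal

noncomputable section

/-- The unit square `M = [0,1]²`. -/
def MSq : Set (ℝ × ℝ) := unitInterval ×ˢ unitInterval

/-- Lower `(C,γ)`-bi-Hölder bound in the second variable. -/
def BiHolderLower (C γ : ℝ) (f : ℝ → ℝ → ℝ) : Prop :=
  ∀ x ∈ unitInterval, ∀ y₁ ∈ unitInterval, ∀ y₂ ∈ unitInterval, y₁ ≠ y₂ →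
    C⁻¹ * |y₂ - y₁| ^ (1 / γ) ≤ |f x y₂ - f x y₁|

/-- Upper `(C,γ)`-Hölder bound in the second variable. -/
def BiHolderUpper (C γ : ℝ) (f : ℝ → ℝ → ℝ) : Prop :=
  ∀ x ∈ unitInterval, ∀ y₁ ∈ unitInterval, ∀ y₂ ∈ unitInterval, y₁ ≠ y₂ →
    |f x y₂ - f x y₁| ≤ C * |y₂ - y₁| ^ γ

/-- Membership in the space `F_(C,γ)`: conditions (i)–(iv); `fx` plays the role of `∂f/∂x`. -/
structure IsFol (C γ : ℝ) (f fx : ℝ → ℝ → ℝ) : Prop where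
  mapsTo : ∀ x ∈ unitInterval, ∀ y ∈ unitInterval, f x y ∈ unitInterval
  hasDeriv : ∀ y ∈ unitInterval, ∀ x ∈ unitInterval,
    HasDerivWithinAt (fun x' => f x' y) (fx x y) unitInterval x
  derivCont : ContinuousOn (fun p : ℝ × ℝ => fx p.1 p.2) MSq
  eq_id : ∀ y ∈ unitInterval, f 0 y = y
  eq_bot : ∀ x ∈ unitInterval, f x 0 = 0
  eq_top : ∀ x ∈ unitInterval, f x 1 = 1
  lower : BiHolderLower C γ f
  upper : BiHolderUpper C γ f

/-- The space `F_(C,γ)`. -/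
structure Fol (C γ : ℝ) where
  f : ℝ → ℝ → ℝ
  fx : ℝ → ℝ → ℝ
  isFol : IsFol C γ f fx

/-- The inverse of `y ↦ f x y` on `[0,1]`, i.e. the holonomy `h^f_{x,0}`. -/
def hinv (f : ℝ → ℝ → ℝ) (x : ℝ) : ℝ → ℝ := Function.invFunOn (f x) unitInterval

/-- The `C⁰` distance over the square. -/
def C0dist (u v : ℝ → ℝ → ℝ) : ℝ :=
  sSup {r | ∃ x ∈ unitInterval, ∃ y ∈ unitInterval, r = |u x y - v x y|}

/-- The `α`-Hölder seminorm of the difference `h - k` on `[0,1]`. -/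
def holDist (α : ℝ) (h k : ℝ → ℝ) : ℝ :=
  sSup {r | ∃ y₁ ∈ unitInterval, ∃ y₂ ∈ unitInterval, y₁ ≠ y₂ ∧
    r = |(h y₂ - k y₂) - (h y₁ - k y₁)| / |y₂ - y₁| ^ α}

/-- The distance `d_α`, on raw data `(f, ∂f/∂x)`, `(g, ∂g/∂x)`. -/
def dalpha (α : ℝ) (f fx g gx : ℝ → ℝ → ℝ) : ℝ :=
  C0dist f g + C0dist fx gx +
    sSup {r | ∃ x ∈ unitInterval,
      r = max (holDist α (f x) (g x)) (holDist α (hinv f x) (hinv g x))}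

/-- The distance `d_α` on `F_(C,γ)`. -/
def dalphaF {C γ : ℝ} (α : ℝ) (F G : Fol C γ) : ℝ := dalpha α F.f F.fx G.f G.fx

/-- Openness with respect to a distance function. -/
def IsOpenWrt {X : Type*} (d : X → X → ℝ) (s : Set X) : Prop :=
  ∀ f ∈ s, ∃ ε > 0, ∀ g, d g f < ε → g ∈ s

/-- Density with respect to a distance function. -/
def IsDenseWrt {X : Type*} (d : X → X → ℝ) (s : Set X) : Prop :=
  ∀ f : X, ∀ ε > 0, ∃ g ∈ s, d g f < ε

/-- Lebesgue measure `μ` on the unit square `M`. -/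
def muM : Measure (ℝ × ℝ) := volume.restrict MSq

/-- The projection `π_f(x,z) = f(x,·)⁻¹(z)` along the leaves. -/
def projF (f : ℝ → ℝ → ℝ) : ℝ × ℝ → ℝ := fun p => hinv f p.1 p.2

/-- The quotient measure `μ̂ = (π_f)_* μ`. -/
def quotM {C γ : ℝ} (F : Fol C γ) : Measure ℝ := muM.map (projF F.f)

/-- The leaf `L_y = {(x, f(x,y)) : x ∈ [0,1]}`. -/
def Leaf {C γ : ℝ} (F : Fol C γ) (y : ℝ) : Set (ℝ × ℝ) :=
  (fun x => (x, F.f x y)) '' unitInterval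

/-- `(ν_y)` is a Rokhlin disintegration of Lebesgue measure on the square w.r.t. `π_f`. -/
def IsDisint {C γ : ℝ} (F : Fol C γ) (ν : ℝ → Measure (ℝ × ℝ)) : Prop :=
  (∀ y, IsProbabilityMeasure (ν y)) ∧
  (∀ E : Set (ℝ × ℝ), MeasurableSet E → Measurable fun y => ν y E) ∧
  (∀ᵐ y ∂quotM F, ν y (Leaf F y) = 1) ∧
  (∀ E : Set (ℝ × ℝ), MeasurableSet E → muM E = ∫⁻ y, ν y E ∂quotM F)

/-- The element `P_i` of the partition `P_{f,n}`. -/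
def Pelt (f : ℝ → ℝ → ℝ) (n i : ℕ) : Set (ℝ × ℝ) :=
  {p | p.1 ∈ unitInterval ∧ f p.1 ((i : ℝ) / 2 ^ n) ≤ p.2 ∧ p.2 < f p.1 (((i : ℝ) + 1) / 2 ^ n)}

/-- `Ĩ = [b₁,b₂] × [0,1]`. -/
def Itilde (b₁ b₂ : ℝ) : Set (ℝ × ℝ) := Icc b₁ b₂ ×ˢ unitInterval

/-- The set `A_{n,m,I}`. -/
def Aset (C γ : ℝ) (n m : ℕ) (b₁ b₂ : ℝ) : Set (Fol C γ) :=
  {F | ∀ i < 2 ^ n,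
    muM (Pelt F.f n i ∩ Itilde b₁ b₂) / muM (Pelt F.f n i) < 1 / (m : ℝ≥0∞) ∨
    1 - 1 / (m : ℝ≥0∞) < muM (Pelt F.f n i ∩ Itilde b₁ b₂) / muM (Pelt F.f n i)}

/-- The set `B_{m,I}`. -/
def Bset (C γ : ℝ) (m : ℕ) (b₁ b₂ : ℝ) : Set (Fol C γ) := ⋃ n : ℕ, Aset C γ n m b₁ b₂

/-- The leaf measure `λ_y`: pushforward of 1-dimensional Lebesgue measure on `[0,1]`
under `x ↦ (x, f(x,y))`. -/
def leafMeas {C γ : ℝ} (F : Fol C γ) (y : ℝ) : Measure (ℝ × ℝ) :=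
  (volume.restrict unitInterval).map fun x => (x, F.f x y)

/-!
A `d_α`-Cauchy sequence `f_n` converges uniformly together with its `x`-derivatives, so its limit
`f` is `C¹` in `x`; the other conditions defining `F_(C,β)` are closed under pointwise limits. The
lower bi-Hölder bound says that the inverses are uniformly `β`-Hölder, whence
`|h^{f_n}_{x,0}(z) - h^f_{x,0}(z)| ≤ (C |z - f_n(x, h^f_{x,0}(z))|)^β → 0`, and every estimate
between `f_k` and `f_l` passes to the limit `l → ∞`.

As the supremum of an unbounded set of reals is `0` by convention, `d_α` dominates the quantities
under its suprema only once these are known to be bounded; for the Hölder quotients this holds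
because both the holonomies and their inverses are `β`-Hölder, hence `α`-Hölder on `[0,1]`.
-/

theorem exists_tendstoUniformlyOn_of_forall_dist_le {ι X E : Type*} [Nonempty ι]
    [SemilatticeSup ι] [PseudoMetricSpace E] [CompleteSpace E] [Nonempty E] {F : ι → X → E}
    {s : Set X} (hF : ∀ ε > 0, ∃ N, ∀ k ≥ N, ∀ l ≥ N, ∀ p ∈ s, dist (F k p) (F l p) ≤ ε) :
    ∃ f, TendstoUniformlyOn F f atTop s := by
  have hCauchy : UniformCauchySeqOn F atTop s := Metric.uniformCauchySeqOn_iff.2 fun ε hε =>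
    (hF (ε / 2) (half_pos hε)).imp fun _ hN k hk l hl p hp =>
      (hN k hk l hl p hp).trans_lt (half_lt_self hε)
  exact ⟨fun p => limUnder atTop fun n => F n p, hCauchy.tendstoUniformlyOn_of_tendsto
    fun _ hp => (hCauchy.cauchySeq hp).tendsto_limUnder⟩

section UniformLimitDerivative

variable {ι 𝕜 E : Type*} [RCLike 𝕜] [NormedAddCommGroup E] [NormedSpace 𝕜 E]
  {l : Filter ι} {s : Set 𝕜} {F F' : ι → 𝕜 → E} {x : 𝕜}

theorem norm_slope_le_of_norm_hasDerivWithin_le {f f' : 𝕜 → E} {ε : ℝ} (hs : Convex ℝ s)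
    (hf : ∀ y ∈ s, HasDerivWithinAt f (f' y) s y) (hε : ∀ y ∈ s, ‖f' y‖ ≤ ε) {y : 𝕜}
    (hx : x ∈ s) (hy : y ∈ s \ {x}) : ‖slope f x y‖ ≤ ε := by
  have hpos : 0 < ‖y - x‖ := norm_pos_iff.2 (sub_ne_zero.2 hy.2)
  rw [slope_def_module, norm_smul, norm_inv, inv_mul_le_iff₀ hpos, mul_comm]
  exact hs.norm_image_sub_le_of_norm_hasDerivWithin_le hf hε hx hy.1

theorem uniformCauchySeqOn_slope (hs : Convex ℝ s) (hx : x ∈ s)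
    (hF : ∀ n, ∀ y ∈ s, HasDerivWithinAt (F n) (F' n y) s y) (hF' : UniformCauchySeqOn F' l s) :
    UniformCauchySeqOn (fun n => slope (F n) x) l (s \ {x}) := by
  rw [SeminormedAddGroup.uniformCauchySeqOn_iff_tendstoUniformlyOn_zero,
    Metric.tendstoUniformlyOn_iff] at hF' ⊢
  intro ε hε
  filter_upwards [hF' (ε / 2) (half_pos hε)] with n hn y hy
  have hslope : ‖slope (F n.2 - F n.1) x y‖ ≤ ε / 2 :=
    norm_slope_le_of_norm_hasDerivWithin_le hs (fun z hz => (hF n.2 z hz).sub (hF n.1 z hz))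
      (fun z hz => by simpa [dist_eq_norm', neg_add_eq_sub] using (hn z hz).le) hx hy
  have hsub : slope (F n.2 - F n.1) x y = slope (F n.2) x y - slope (F n.1) x y := by
    simp only [slope_def_module, Pi.sub_apply, ← smul_sub, sub_sub_sub_comm]
  rw [Pi.zero_apply, dist_zero_left, neg_add_eq_sub, ← hsub]
  exact hslope.trans_lt (half_lt_self hε)

theorem hasDerivWithinAt_of_tendstoUniformlyOn [l.NeBot] (hs : Convex ℝ s) {f f' : 𝕜 → E}
    (hF : ∀ n, ∀ y ∈ s, HasDerivWithinAt (F n) (F' n y) s y)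
    (hFf : ∀ y ∈ s, Tendsto (fun n => F n y) l (𝓝 (f y))) (hF' : TendstoUniformlyOn F' f' l s)
    (hx : x ∈ s) : HasDerivWithinAt f (f' x) s x := by
  have hslope : TendstoUniformlyOn (fun n => slope (F n) x) (slope f x) l (s \ {x}) :=
    (uniformCauchySeqOn_slope hs hx hF hF'.uniformCauchySeqOn).tendstoUniformlyOn_of_tendsto
      fun y hy => by
        simpa only [slope_def_module] using ((hFf y hy.1).sub (hFf x hx)).const_smul (y - x)⁻¹
  rw [hasDerivWithinAt_iff_tendsto_slope]
  exact (hslope.tendstoUniformlyOnFilter.mono_right inf_le_right).tendsto_of_eventually_tendsto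
    (Eventually.of_forall fun n => hasDerivWithinAt_iff_tendsto_slope.1 (hF n x hx))
    (hF'.tendsto_at hx)

end UniformLimitDerivative

theorem rpow_abs_sub_pos {y₁ y₂ : ℝ} (hne : y₁ ≠ y₂) (α : ℝ) : 0 < |y₂ - y₁| ^ α :=
  Real.rpow_pos_of_pos (abs_pos.2 (sub_ne_zero.2 hne.symm)) α

/-- The function `h` satisfies the Hölder bound with exponent `γ` and constant `A` on `s`. Both are
real numbers, unlike in `HolderOnWith`, to match `BiHolderUpper` and `holDist`. -/
def HolderBoundOn (γ A : ℝ) (h : ℝ → ℝ) (s : Set ℝ) : Prop :=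
  ∀ y₁ ∈ s, ∀ y₂ ∈ s, y₁ ≠ y₂ → |h y₂ - h y₁| ≤ A * |y₂ - y₁| ^ γ

namespace HolderBoundOn

variable {α γ A B : ℝ} {h k : ℝ → ℝ} {s : Set ℝ}

theorem mono_const (hh : HolderBoundOn γ A h s) (hAB : A ≤ B) : HolderBoundOn γ B h s :=
  fun y₁ hy₁ y₂ hy₂ hne => (hh y₁ hy₁ y₂ hy₂ hne).trans (by gcongr)

theorem mono_exponent (hh : HolderBoundOn γ A h unitInterval) (hαγ : α ≤ γ) :
    HolderBoundOn α A h unitInterval := by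
  intro y₁ hy₁ y₂ hy₂ hne
  have hpos : 0 < |y₂ - y₁| := abs_pos.2 (sub_ne_zero.2 hne.symm)
  have hA : 0 ≤ A := nonneg_of_mul_nonneg_left
    ((abs_nonneg _).trans (hh y₁ hy₁ y₂ hy₂ hne)) (rpow_abs_sub_pos hne γ)
  have hle : |y₂ - y₁| ≤ 1 := Real.dist_le_of_mem_Icc_01 hy₂ hy₁
  calc |h y₂ - h y₁| ≤ A * |y₂ - y₁| ^ γ := hh y₁ hy₁ y₂ hy₂ hne
    _ ≤ A * |y₂ - y₁| ^ α :=
      mul_le_mul_of_nonneg_left (Real.rpow_le_rpow_of_exponent_ge hpos hle hαγ) hA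

theorem sub (hh : HolderBoundOn γ A h s) (hk : HolderBoundOn γ B k s) :
    HolderBoundOn γ (A + B) (h - k) s := by
  intro y₁ hy₁ y₂ hy₂ hne
  calc |(h - k) y₂ - (h - k) y₁| = |(h y₂ - h y₁) - (k y₂ - k y₁)| := by
        rw [Pi.sub_apply, Pi.sub_apply, sub_sub_sub_comm]
    _ ≤ |h y₂ - h y₁| + |k y₂ - k y₁| := abs_sub _ _
    _ ≤ A * |y₂ - y₁| ^ γ + B * |y₂ - y₁| ^ γ :=
        add_le_add (hh y₁ hy₁ y₂ hy₂ hne) (hk y₁ hy₁ y₂ hy₂ hne)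
    _ = (A + B) * |y₂ - y₁| ^ γ := (add_mul _ _ _).symm

theorem continuousOn (hγ : 0 < γ) (hh : HolderBoundOn γ A h s) : ContinuousOn h s := by
  intro y hy
  have hlim : Tendsto (fun z => A * |z - y| ^ γ) (𝓝[s] y) (𝓝 0) := by
    have hcont : Continuous fun z : ℝ => A * |z - y| ^ γ := by fun_prop (disch := grind)
    simpa [hγ.ne'] using hcont.continuousWithinAt (s := s) (x := y) |>.tendsto
  refine tendsto_iff_dist_tendsto_zero.2
    (squeeze_zero' (Eventually.of_forall fun _ => dist_nonneg) ?_ hlim)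
  filter_upwards [self_mem_nhdsWithin] with z hz
  obtain rfl | hne := eq_or_ne y z
  · simp [hγ.ne']
  · exact hh y hy z hz hne

theorem of_tendsto {ι : Type*} {l : Filter ι} [l.NeBot] {H : ι → ℝ → ℝ}
    (hH : ∀ᶠ n in l, HolderBoundOn γ A (H n) s)
    (hlim : ∀ y ∈ s, Tendsto (fun n => H n y) l (𝓝 (h y))) : HolderBoundOn γ A h s :=
  fun y₁ hy₁ y₂ hy₂ hne => le_of_tendsto ((hlim y₂ hy₂).sub (hlim y₁ hy₁)).abs
    (hH.mono fun _ hn => hn y₁ hy₁ y₂ hy₂ hne)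

end HolderBoundOn

section Distances

variable {α ε K : ℝ} {u v f g : ℝ → ℝ → ℝ} {h k : ℝ → ℝ}

theorem C0dist_nonneg (u v : ℝ → ℝ → ℝ) : 0 ≤ C0dist u v :=
  Real.sSup_nonneg (by rintro _ ⟨x, -, y, -, rfl⟩; exact abs_nonneg _)

theorem C0dist_le (hε : 0 ≤ ε)
    (huv : ∀ x ∈ unitInterval, ∀ y ∈ unitInterval, |u x y - v x y| ≤ ε) : C0dist u v ≤ ε :=
  Real.sSup_le (by rintro _ ⟨x, hx, y, hy, rfl⟩; exact huv x hx y hy) hε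

theorem abs_sub_le_C0dist
    (huv : ∀ x ∈ unitInterval, ∀ y ∈ unitInterval, |u x y - v x y| ≤ K) {x y : ℝ}
    (hx : x ∈ unitInterval) (hy : y ∈ unitInterval) : |u x y - v x y| ≤ C0dist u v :=
  le_csSup ⟨K, by rintro _ ⟨x, hx, y, hy, rfl⟩; exact huv x hx y hy⟩ ⟨x, hx, y, hy, rfl⟩

theorem holDist_nonneg (α : ℝ) (h k : ℝ → ℝ) : 0 ≤ holDist α h k :=
  Real.sSup_nonneg (by rintro _ ⟨y₁, -, y₂, -, -, rfl⟩; positivity)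

theorem HolderBoundOn.div_le {s : Set ℝ} (hhk : HolderBoundOn α K (h - k) s) {y₁ y₂ : ℝ}
    (hy₁ : y₁ ∈ s) (hy₂ : y₂ ∈ s) (hne : y₁ ≠ y₂) :
    |(h y₂ - k y₂) - (h y₁ - k y₁)| / |y₂ - y₁| ^ α ≤ K :=
  (div_le_iff₀ (rpow_abs_sub_pos hne α)).2 (hhk y₁ hy₁ y₂ hy₂ hne)

theorem holDist_le (hε : 0 ≤ ε) (hhk : HolderBoundOn α ε (h - k) unitInterval) :
    holDist α h k ≤ ε :=
  Real.sSup_le (by rintro _ ⟨y₁, hy₁, y₂, hy₂, hne, rfl⟩; exact hhk.div_le hy₁ hy₂ hne) hε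

theorem holderBoundOn_holDist (hhk : HolderBoundOn α K (h - k) unitInterval) :
    HolderBoundOn α (holDist α h k) (h - k) unitInterval :=
  fun y₁ hy₁ y₂ hy₂ hne => (div_le_iff₀ (rpow_abs_sub_pos hne α)).1
    (le_csSup ⟨K, by rintro _ ⟨y₁, hy₁, y₂, hy₂, hne, rfl⟩; exact hhk.div_le hy₁ hy₂ hne⟩
      ⟨y₁, hy₁, y₂, hy₂, hne, rfl⟩)

/-- The holonomy term of `d_α`: the supremum over `x` of the `α`-Hölder distances between the
holonomies `h_{0,x}` and between the inverse holonomies `h_{x,0}`. -/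
def holonomyDist (α : ℝ) (f g : ℝ → ℝ → ℝ) : ℝ :=
  sSup {r | ∃ x ∈ unitInterval,
    r = max (holDist α (f x) (g x)) (holDist α (hinv f x) (hinv g x))}

theorem holonomyDist_nonneg (α : ℝ) (f g : ℝ → ℝ → ℝ) : 0 ≤ holonomyDist α f g :=
  Real.sSup_nonneg (by rintro _ ⟨x, -, rfl⟩; exact le_max_of_le_left (holDist_nonneg _ _ _))

theorem holonomyDist_le (hε : 0 ≤ ε)
    (hf : ∀ x ∈ unitInterval, holDist α (f x) (g x) ≤ ε)
    (hinv_le : ∀ x ∈ unitInterval, holDist α (hinv f x) (hinv g x) ≤ ε) :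
    holonomyDist α f g ≤ ε :=
  Real.sSup_le (by rintro _ ⟨x, hx, rfl⟩; exact max_le (hf x hx) (hinv_le x hx)) hε

theorem max_holDist_le_holonomyDist
    (hf : ∀ x ∈ unitInterval, holDist α (f x) (g x) ≤ K)
    (hinv_le : ∀ x ∈ unitInterval, holDist α (hinv f x) (hinv g x) ≤ K) {x : ℝ}
    (hx : x ∈ unitInterval) :
    max (holDist α (f x) (g x)) (holDist α (hinv f x) (hinv g x)) ≤ holonomyDist α f g :=
  le_csSup ⟨K, by rintro _ ⟨x, hx, rfl⟩; exact max_le (hf x hx) (hinv_le x hx)⟩ ⟨x, hx, rfl⟩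

end Distances

/-- All the quantities whose suprema make up `d_α((f, fx), (g, gx))` are at most `ε`. Unlike a
bound on the real number `dalpha α f fx g gx`, this is meaningful for infinite suprema. -/
structure PointwiseClose (α ε : ℝ) (f fx g gx : ℝ → ℝ → ℝ) : Prop where
  value : ∀ x ∈ unitInterval, ∀ y ∈ unitInterval, |f x y - g x y| ≤ ε
  deriv : ∀ x ∈ unitInterval, ∀ y ∈ unitInterval, |fx x y - gx x y| ≤ ε
  holonomy : ∀ x ∈ unitInterval, HolderBoundOn α ε (f x - g x) unitInterval
  holonomyInv : ∀ x ∈ unitInterval, HolderBoundOn α ε (hinv f x - hinv g x) unitInterval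

namespace PointwiseClose

variable {α ε K : ℝ} {f fx g gx : ℝ → ℝ → ℝ}

theorem mono (h : PointwiseClose α ε f fx g gx) (hεK : ε ≤ K) : PointwiseClose α K f fx g gx where
  value x hx y hy := (h.value x hx y hy).trans hεK
  deriv x hx y hy := (h.deriv x hx y hy).trans hεK
  holonomy x hx := (h.holonomy x hx).mono_const hεK
  holonomyInv x hx := (h.holonomyInv x hx).mono_const hεK

theorem nonneg (h : PointwiseClose α ε f fx g gx) : 0 ≤ ε :=
  (abs_nonneg _).trans (h.value 0 unitInterval.zero_mem 0 unitInterval.zero_mem)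

theorem holDist_holonomy_le (h : PointwiseClose α ε f fx g gx) {x : ℝ} (hx : x ∈ unitInterval) :
    holDist α (f x) (g x) ≤ ε :=
  holDist_le h.nonneg (h.holonomy x hx)

theorem holDist_holonomyInv_le (h : PointwiseClose α ε f fx g gx) {x : ℝ} (hx : x ∈ unitInterval) :
    holDist α (hinv f x) (hinv g x) ≤ ε :=
  holDist_le h.nonneg (h.holonomyInv x hx)

theorem dalpha_le (h : PointwiseClose α ε f fx g gx) : dalpha α f fx g gx ≤ 3 * ε :=
  calc dalpha α f fx g gx = C0dist f g + C0dist fx gx + holonomyDist α f g := rfl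
    _ ≤ ε + ε + ε := add_le_add
      (add_le_add (C0dist_le h.nonneg h.value) (C0dist_le h.nonneg h.deriv))
      (holonomyDist_le h.nonneg (fun _ => h.holDist_holonomy_le) fun _ => h.holDist_holonomyInv_le)
    _ = 3 * ε := by ring

theorem pointwiseClose_dalpha (h : PointwiseClose α K f fx g gx) :
    PointwiseClose α (dalpha α f fx g gx) f fx g gx := by
  have hdef : dalpha α f fx g gx = C0dist f g + C0dist fx gx + holonomyDist α f g := rfl
  have hval := C0dist_nonneg f g
  have hder := C0dist_nonneg fx gx
  have hhol := holonomyDist_nonneg α f g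
  have hmax : ∀ x ∈ unitInterval, max (holDist α (f x) (g x)) (holDist α (hinv f x) (hinv g x)) ≤
      dalpha α f fx g gx := fun x hx =>
    (max_holDist_le_holonomyDist (fun _ => h.holDist_holonomy_le)
      (fun _ => h.holDist_holonomyInv_le) hx).trans (by linarith)
  exact
    { value := fun x hx y hy => (abs_sub_le_C0dist h.value hx hy).trans (by linarith)
      deriv := fun x hx y hy => (abs_sub_le_C0dist h.deriv hx hy).trans (by linarith)
      holonomy := fun x hx => (holderBoundOn_holDist (h.holonomy x hx)).mono_const
        ((le_max_left _ _).trans (hmax x hx))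
      holonomyInv := fun x hx => (holderBoundOn_holDist (h.holonomyInv x hx)).mono_const
        ((le_max_right _ _).trans (hmax x hx)) }

theorem of_tendsto {ι : Type*} {l : Filter ι} [l.NeBot] {G Gx : ι → ℝ → ℝ → ℝ}
    (hG : ∀ᶠ n in l, PointwiseClose α ε f fx (G n) (Gx n))
    (hg : ∀ x ∈ unitInterval, ∀ y ∈ unitInterval, Tendsto (fun n => G n x y) l (𝓝 (g x y)))
    (hgx : ∀ x ∈ unitInterval, ∀ y ∈ unitInterval, Tendsto (fun n => Gx n x y) l (𝓝 (gx x y)))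
    (hginv : ∀ x ∈ unitInterval, ∀ y ∈ unitInterval,
      Tendsto (fun n => hinv (G n) x y) l (𝓝 (hinv g x y))) :
    PointwiseClose α ε f fx g gx where
  value x hx y hy := le_of_tendsto ((hg x hx y hy).const_sub _).abs
    (hG.mono fun _ hn => hn.value x hx y hy)
  deriv x hx y hy := le_of_tendsto ((hgx x hx y hy).const_sub _).abs
    (hG.mono fun _ hn => hn.deriv x hx y hy)
  holonomy x hx := .of_tendsto (hG.mono fun _ hn => hn.holonomy x hx)
    fun y hy => (hg x hx y hy).const_sub _
  holonomyInv x hx := .of_tendsto (hG.mono fun _ hn => hn.holonomyInv x hx)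
    fun y hy => (hginv x hx y hy).const_sub _

end PointwiseClose

theorem BiHolderLower.abs_sub_le {C β : ℝ} {f : ℝ → ℝ → ℝ} (hf : BiHolderLower C β f) (hC : 0 < C)
    (hβ : 0 < β) {x y z : ℝ} (hx : x ∈ unitInterval) (hy : y ∈ unitInterval)
    (hz : z ∈ unitInterval) : |z - y| ≤ (C * |f x z - f x y|) ^ β := by
  obtain rfl | hne := eq_or_ne y z
  · simp [hβ.ne']
  · have hroot : |z - y| ^ (1 / β) ≤ C * |f x z - f x y| :=
      (inv_mul_le_iff₀ hC).1 (hf x hx y hy z hz hne)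
    calc |z - y| = (|z - y| ^ (1 / β)) ^ β := by
          rw [← Real.rpow_mul (abs_nonneg _), one_div_mul_cancel hβ.ne', Real.rpow_one]
      _ ≤ (C * |f x z - f x y|) ^ β := by gcongr

namespace IsFol

variable {C β : ℝ} {f fx g gx : ℝ → ℝ → ℝ} {x z : ℝ}

theorem one_le_const (hf : IsFol C β f fx) : 1 ≤ C := by
  have hupper := hf.upper 0 unitInterval.zero_mem 0 unitInterval.zero_mem 1 unitInterval.one_mem
    zero_ne_one
  simpa [hf.eq_id 0 unitInterval.zero_mem, hf.eq_id 1 unitInterval.one_mem] using hupper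

theorem const_pos (hf : IsFol C β f fx) : 0 < C := zero_lt_one.trans_le hf.one_le_const

theorem surjOn (hf : IsFol C β f fx) (hβ : 0 < β) (hx : x ∈ unitInterval) :
    SurjOn (f x) unitInterval unitInterval := by
  have hcont : ContinuousOn (f x) unitInterval := HolderBoundOn.continuousOn hβ (hf.upper x hx)
  have hivt := intermediate_value_Icc zero_le_one hcont
  rwa [hf.eq_bot x hx, hf.eq_top x hx] at hivt

theorem hinv_mem (hf : IsFol C β f fx) (hβ : 0 < β) (hx : x ∈ unitInterval)
    (hz : z ∈ unitInterval) : hinv f x z ∈ unitInterval :=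
  Function.invFunOn_mem (hf.surjOn hβ hx hz)

theorem apply_hinv (hf : IsFol C β f fx) (hβ : 0 < β) (hx : x ∈ unitInterval)
    (hz : z ∈ unitInterval) : f x (hinv f x z) = z :=
  Function.invFunOn_eq (hf.surjOn hβ hx hz)

theorem abs_hinv_sub_le (hf : IsFol C β f fx) (hβ : 0 < β) {y : ℝ} (hx : x ∈ unitInterval)
    (hy : y ∈ unitInterval) (hz : z ∈ unitInterval) :
    |hinv f x z - y| ≤ (C * |z - f x y|) ^ β := by
  simpa only [hf.apply_hinv hβ hx hz] using
    hf.lower.abs_sub_le hf.const_pos hβ hx hy (hf.hinv_mem hβ hx hz)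

theorem holderBoundOn_hinv (hf : IsFol C β f fx) (hβ : 0 < β) (hx : x ∈ unitInterval) :
    HolderBoundOn β (C ^ β) (hinv f x) unitInterval := by
  intro y hy z hz _
  rw [← Real.mul_rpow hf.const_pos.le (abs_nonneg _)]
  simpa only [hf.apply_hinv hβ hx hy] using hf.abs_hinv_sub_le hβ hx (hf.hinv_mem hβ hx hy) hz

theorem exists_pointwiseClose {α : ℝ} (hf : IsFol C β f fx) (hg : IsFol C β g gx) (hβ : 0 < β)
    (hαβ : α ≤ β) : ∃ K, PointwiseClose α K f fx g gx := by
  obtain ⟨B, hB⟩ := (isCompact_Icc.prod isCompact_Icc : IsCompact MSq).exists_bound_of_continuousOn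
    (hf.derivCont.sub hg.derivCont)
  have hhol : ∀ x ∈ unitInterval, HolderBoundOn α (C + C) (f x - g x) unitInterval := fun x hx =>
    (HolderBoundOn.sub (hf.upper x hx) (hg.upper x hx)).mono_exponent hαβ
  have hholInv : ∀ x ∈ unitInterval,
      HolderBoundOn α (C ^ β + C ^ β) (hinv f x - hinv g x) unitInterval := fun x hx =>
    ((hf.holderBoundOn_hinv hβ hx).sub (hg.holderBoundOn_hinv hβ hx)).mono_exponent hαβ
  exact ⟨max (max 1 B) (max (C + C) (C ^ β + C ^ β)),
    { value := fun x hx y hy => le_max_of_le_left <| le_max_of_le_left <|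
        Real.dist_le_of_mem_Icc_01 (hf.mapsTo x hx y hy) (hg.mapsTo x hx y hy)
      deriv := fun x hx y hy => le_max_of_le_left <| le_max_of_le_right <| hB (x, y) ⟨hx, hy⟩
      holonomy := fun x hx =>
        (hhol x hx).mono_const (le_max_of_le_right (le_max_left _ _))
      holonomyInv := fun x hx =>
        (hholInv x hx).mono_const (le_max_of_le_right (le_max_right _ _)) }⟩

theorem pointwiseClose_dalpha {α : ℝ} (hf : IsFol C β f fx) (hg : IsFol C β g gx) (hβ : 0 < β)
    (hαβ : α ≤ β) : PointwiseClose α (dalpha α f fx g gx) f fx g gx :=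
  (hf.exists_pointwiseClose hg hβ hαβ).elim fun _ h => h.pointwiseClose_dalpha

section Limit

variable {ι : Type*} {l : Filter ι} {F Fx : ι → ℝ → ℝ → ℝ}

theorem of_tendsto [l.NeBot] (hF : ∀ n, IsFol C β (F n) (Fx n))
    (hf : ∀ x ∈ unitInterval, ∀ y ∈ unitInterval, Tendsto (fun n => F n x y) l (𝓝 (f x y)))
    (hfx : TendstoUniformlyOn (fun n p => Fx n p.1 p.2) (fun p => fx p.1 p.2) l MSq) :
    IsFol C β f fx where
  mapsTo x hx y hy := isClosed_Icc.mem_of_tendsto (hf x hx y hy)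
    (Eventually.of_forall fun n => (hF n).mapsTo x hx y hy)
  hasDeriv y hy x hx := hasDerivWithinAt_of_tendstoUniformlyOn (convex_Icc 0 1)
    (fun n => (hF n).hasDeriv y hy) (fun x' hx' => hf x' hx' y hy)
    ((hfx.comp fun x' => (x', y)).mono fun _ hx' => ⟨hx', hy⟩) hx
  derivCont := hfx.continuousOn (Frequently.of_forall fun n => (hF n).derivCont)
  eq_id y hy := tendsto_nhds_unique (hf 0 unitInterval.zero_mem y hy)
    (by simp only [(hF _).eq_id y hy, tendsto_const_nhds])
  eq_bot x hx := tendsto_nhds_unique (hf x hx 0 unitInterval.zero_mem)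
    (by simp only [(hF _).eq_bot x hx, tendsto_const_nhds])
  eq_top x hx := tendsto_nhds_unique (hf x hx 1 unitInterval.one_mem)
    (by simp only [(hF _).eq_top x hx, tendsto_const_nhds])
  lower x hx y hy z hz hne := ge_of_tendsto ((hf x hx z hz).sub (hf x hx y hy)).abs
    (Eventually.of_forall fun n => (hF n).lower x hx y hy z hz hne)
  upper x hx := HolderBoundOn.of_tendsto (Eventually.of_forall fun n => (hF n).upper x hx) (hf x hx)

theorem tendsto_hinv (hβ : 0 < β) (hF : ∀ n, IsFol C β (F n) (Fx n)) (hfol : IsFol C β f fx)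
    (hf : ∀ y ∈ unitInterval, Tendsto (fun n => F n x y) l (𝓝 (f x y))) (hx : x ∈ unitInterval)
    (hz : z ∈ unitInterval) : Tendsto (fun n => hinv (F n) x z) l (𝓝 (hinv f x z)) := by
  have hmem : hinv f x z ∈ unitInterval := hfol.hinv_mem hβ hx hz
  have hlim : Tendsto (fun n => (C * |z - F n x (hinv f x z)|) ^ β) l (𝓝 0) := by
    simpa [hfol.apply_hinv hβ hx hz, hβ.ne'] using
      ((((hf _ hmem).const_sub z).abs).const_mul C).rpow_const (Or.inr hβ.le)
  exact tendsto_iff_dist_tendsto_zero.2 (squeeze_zero (fun _ => dist_nonneg)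
    (fun n => (hF n).abs_hinv_sub_le hβ hx hmem hz) hlim)

end Limit

end IsFol

theorem stmt3_general (C β α : ℝ) (hβ : 0 < β) (hαβ : α ≤ β) (fseq : ℕ → Fol C β)
    (hCauchy : ∀ ε : ℝ, 0 < ε → ∃ N : ℕ, ∀ k ≥ N, ∀ l ≥ N,
      dalphaF α (fseq k) (fseq l) < ε) :
    ∃ F : Fol C β, ∀ ε : ℝ, 0 < ε → ∃ N : ℕ, ∀ k ≥ N, dalphaF α (fseq k) F < ε := by
  have hclose : ∀ ε > 0, ∃ N, ∀ k ≥ N, ∀ l ≥ N,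
      PointwiseClose α ε (fseq k).f (fseq k).fx (fseq l).f (fseq l).fx := fun ε hε =>
    (hCauchy ε hε).imp fun N hN k hk l hl =>
      ((fseq k).isFol.pointwiseClose_dalpha (fseq l).isFol hβ hαβ).mono (hN k hk l hl).le
  obtain ⟨f, hf⟩ := exists_tendstoUniformlyOn_of_forall_dist_le (s := MSq)
    (F := fun n p => (fseq n).f p.1 p.2) fun ε hε => (hclose ε hε).imp fun _ hN k hk l hl p hp =>
      (hN k hk l hl).value p.1 hp.1 p.2 hp.2
  obtain ⟨fx, hfx⟩ := exists_tendstoUniformlyOn_of_forall_dist_le (s := MSq)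
    (F := fun n p => (fseq n).fx p.1 p.2) fun ε hε => (hclose ε hε).imp fun _ hN k hk l hl p hp =>
      (hN k hk l hl).deriv p.1 hp.1 p.2 hp.2
  have hlim : ∀ x ∈ unitInterval, ∀ y ∈ unitInterval,
      Tendsto (fun n => (fseq n).f x y) atTop (𝓝 (f (x, y))) :=
    fun x hx y hy => hf.tendsto_at (x := (x, y)) ⟨hx, hy⟩
  have hfol : IsFol C β (Function.curry f) (Function.curry fx) :=
    .of_tendsto (fun n => (fseq n).isFol) hlim hfx
  refine ⟨⟨_, _, hfol⟩, fun ε hε => (hclose (ε / 4) (by positivity)).imp fun N hN k hk => ?_⟩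
  have hkf := PointwiseClose.of_tendsto ((eventually_ge_atTop N).mono (hN k hk)) hlim
    (fun x hx y hy => hfx.tendsto_at (x := (x, y)) ⟨hx, hy⟩)
    fun x hx _ => IsFol.tendsto_hinv hβ (fun n => (fseq n).isFol) hfol (hlim x hx) hx
  exact hkf.dalpha_le.trans_lt (by linarith)

/-- `(F_(C,β), d_α)` is complete: every `d_α`-Cauchy sequence in `F_(C,β)`
converges in the metric `d_α` to some element of `F_(C,β)`. -/
theorem stmt3 (C β α : ℝ) (hC : 1 < C) (hα : 0 ≤ α) (hαβ : α < β) (hβ : β < 1)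
    (fseq : ℕ → Fol C β)
    (hCauchy : ∀ ε : ℝ, 0 < ε → ∃ N : ℕ, ∀ k ≥ N, ∀ l ≥ N,
      dalphaF α (fseq k) (fseq l) < ε) :
    ∃ F : Fol C β, ∀ ε : ℝ, 0 < ε → ∃ N : ℕ, ∀ k ≥ N, dalphaF α (fseq k) F < ε :=
  stmt3_general C β α (hα.trans_lt hαβ) hαβ.le fseq hCauchy

end
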